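/- arXiv:1909.06624 — 4 statements merged into one kernel-verified Lean document; each statement's English description precedes it below -/
import Mathlib

section
/- Let U_i, Û_i ∈ ℝ^{p_i×r_i} (i = 1,2,3) be orthonormal matrices. Then ‖U_3⊗U_2⊗U_1 − Û_3⊗Û_2⊗Û_1‖_F ≤ √(r1·r2)·‖U_3 − Û_3‖_F + √(r1·r3)·‖U_2 − Û_2‖_F + √(r2·r3)·‖U_1 − Û_1‖_F. -/
open scoped BigOperators Kronecker
open Matrix

/-- Frobenius norm of a matrix: square root of the sum of squared entries. -/
noncomputable def frob {m n : Type*} [Fintype m] [Fintype n] (M : Matrix m n ℝ) : ℝ :=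
  Real.sqrt (∑ i, ∑ j, (M i j) ^ 2)

/-!
Replacing the factors of `U₃ ⊗ U₂ ⊗ U₁` one at a time writes the difference as a telescoping sum
of three Kronecker products, each with one factor `Uᵢ - Vᵢ`. The Frobenius norm is multiplicative
on Kronecker products, and a matrix with `r` orthonormal columns has Frobenius norm `√r`.
-/

theorem kronecker_sub_kronecker {R l m n p : Type*} [NonUnitalNonAssocRing R]
    (A A' : Matrix l m R) (B B' : Matrix n p R) :
    A ⊗ₖ B - A' ⊗ₖ B' = (A - A') ⊗ₖ B + A' ⊗ₖ (B - B') := by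
  ext
  simp only [Matrix.sub_apply, Matrix.add_apply, kroneckerMap_apply, sub_mul, mul_sub,
    sub_add_sub_cancel]

section Frob

variable {m n p q : Type*} [Fintype m] [Fintype n] [Fintype p] [Fintype q]

theorem frob_nonneg (M : Matrix m n ℝ) : 0 ≤ frob M :=
  Real.sqrt_nonneg _

open scoped Matrix.Norms.Frobenius in
theorem frob_eq_frobenius_norm (M : Matrix m n ℝ) : frob M = ‖M‖ := by
  simp [frob, frobenius_norm_def, Real.sqrt_eq_rpow]

theorem frob_add_le (M N : Matrix m n ℝ) : frob (M + N) ≤ frob M + frob N := by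
  open scoped Matrix.Norms.Frobenius in
  simpa only [frob_eq_frobenius_norm] using norm_add_le M N

theorem frob_eq_sqrt_trace (M : Matrix m n ℝ) : frob M = √(Mᵀ * M).trace := by
  rw [frob, Finset.sum_comm]
  simp only [trace, diag_apply, mul_apply, transpose_apply, sq]

theorem frob_kronecker (M : Matrix m n ℝ) (N : Matrix p q ℝ) :
    frob (M ⊗ₖ N) = frob M * frob N := by
  have trace_nonneg : 0 ≤ (Mᵀ * M).trace := (posSemidef_conjTranspose_mul_self M).trace_nonneg
  have gram_eq : (M ⊗ₖ N)ᵀ * (M ⊗ₖ N) = (Mᵀ * M) ⊗ₖ (Nᵀ * N) := by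
    rw [← kroneckerMap_transpose, mul_kronecker_mul]
  rw [frob_eq_sqrt_trace, gram_eq, trace_kronecker, Real.sqrt_mul trace_nonneg,
    ← frob_eq_sqrt_trace, ← frob_eq_sqrt_trace]

theorem frob_eq_sqrt_card_of_transpose_mul_self_eq_one [DecidableEq n] {M : Matrix m n ℝ}
    (hM : Mᵀ * M = 1) : frob M = √(Fintype.card n) := by
  rw [frob_eq_sqrt_trace, hM, trace_one]

theorem frob_kronecker_sub_kronecker_le (A A' : Matrix m n ℝ) (B B' : Matrix p q ℝ) :
    frob (A ⊗ₖ B - A' ⊗ₖ B') ≤ frob (A - A') * frob B + frob A' * frob (B - B') := by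
  rw [kronecker_sub_kronecker]
  simpa only [frob_kronecker] using frob_add_le ((A - A') ⊗ₖ B) (A' ⊗ₖ (B - B'))

theorem frob_kronecker_kronecker_sub_le {k l : Type*} [Fintype k] [Fintype l]
    (A A' : Matrix m n ℝ) (B B' : Matrix p q ℝ) (C C' : Matrix k l ℝ) :
    frob (A ⊗ₖ B ⊗ₖ C - A' ⊗ₖ B' ⊗ₖ C') ≤
      frob (A - A') * frob B * frob C + frob A' * frob (B - B') * frob C +
        frob A' * frob B' * frob (C - C') :=
  calc frob (A ⊗ₖ B ⊗ₖ C - A' ⊗ₖ B' ⊗ₖ C')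
    _ ≤ frob (A ⊗ₖ B - A' ⊗ₖ B') * frob C + frob (A' ⊗ₖ B') * frob (C - C') :=
      frob_kronecker_sub_kronecker_le _ _ _ _
    _ ≤ (frob (A - A') * frob B + frob A' * frob (B - B')) * frob C +
          frob (A' ⊗ₖ B') * frob (C - C') := by
      have := frob_nonneg C
      gcongr
      exact frob_kronecker_sub_kronecker_le _ _ _ _
    _ = _ := by rw [frob_kronecker A' B', add_mul]

end Frob

theorem kronecker_diff_bound_general {m₁ m₂ m₃ n₁ n₂ n₃ : Type*}
    [Fintype m₁] [Fintype m₂] [Fintype m₃] [Fintype n₁] [Fintype n₂] [Fintype n₃]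
    [DecidableEq n₁] [DecidableEq n₂] [DecidableEq n₃]
    {U₁ V₁ : Matrix m₁ n₁ ℝ} {U₂ V₂ : Matrix m₂ n₂ ℝ} {U₃ V₃ : Matrix m₃ n₃ ℝ}
    (hU₁ : U₁ᵀ * U₁ = 1) (hU₂ : U₂ᵀ * U₂ = 1) (hV₂ : V₂ᵀ * V₂ = 1) (hV₃ : V₃ᵀ * V₃ = 1) :
    frob (U₃ ⊗ₖ U₂ ⊗ₖ U₁ - V₃ ⊗ₖ V₂ ⊗ₖ V₁) ≤
      √((Fintype.card n₁ : ℝ) * Fintype.card n₂) * frob (U₃ - V₃) +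
      √((Fintype.card n₁ : ℝ) * Fintype.card n₃) * frob (U₂ - V₂) +
      √((Fintype.card n₂ : ℝ) * Fintype.card n₃) * frob (U₁ - V₁) := by
  have frob_U₁ := frob_eq_sqrt_card_of_transpose_mul_self_eq_one hU₁
  have frob_U₂ := frob_eq_sqrt_card_of_transpose_mul_self_eq_one hU₂
  have frob_V₂ := frob_eq_sqrt_card_of_transpose_mul_self_eq_one hV₂
  have frob_V₃ := frob_eq_sqrt_card_of_transpose_mul_self_eq_one hV₃
  refine (frob_kronecker_kronecker_sub_le U₃ V₃ U₂ V₂ U₁ V₁).trans_eq ?_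
  simp only [frob_U₁, frob_U₂, frob_V₂, frob_V₃, Real.sqrt_mul (Nat.cast_nonneg _)]
  ring

/-- For orthonormal matrices `Uᵢ, Ûᵢ ∈ ℝ^{pᵢ×rᵢ}`,
`‖U3⊗U2⊗U1 − Û3⊗Û2⊗Û1‖_F ≤ √(r1·r2)·‖U3 − Û3‖_F + √(r1·r3)·‖U2 − Û2‖_F
  + √(r2·r3)·‖U1 − Û1‖_F`. -/
theorem kronecker_diff_bound {p1 p2 p3 r1 r2 r3 : ℕ}
    (U1 V1 : Matrix (Fin p1) (Fin r1) ℝ) (U2 V2 : Matrix (Fin p2) (Fin r2) ℝ)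
    (U3 V3 : Matrix (Fin p3) (Fin r3) ℝ)
    (hU1 : U1ᵀ * U1 = 1) (hU2 : U2ᵀ * U2 = 1) (hU3 : U3ᵀ * U3 = 1)
    (hV1 : V1ᵀ * V1 = 1) (hV2 : V2ᵀ * V2 = 1) (hV3 : V3ᵀ * V3 = 1) :
    frob (U3 ⊗ₖ U2 ⊗ₖ U1 - V3 ⊗ₖ V2 ⊗ₖ V1) ≤
      Real.sqrt ((r1 : ℝ) * r2) * frob (U3 - V3) +
      Real.sqrt ((r1 : ℝ) * r3) * frob (U2 - V2) +
      Real.sqrt ((r2 : ℝ) * r3) * frob (U1 - V1) := by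
  simpa only [Fintype.card_fin] using kronecker_diff_bound_general hU1 hU2 hV2 hV3
end

section
/- Let J ∈ ℝ^{N×N} be symmetric positive definite, let R ∈ ℝ^{N×k}, M ∈ ℝ^{k×l}, and set H = RM. Suppose HᵀJH and RᵀJR are invertible. Then H(HᵀJH)⁻¹Hᵀ ≤ R(RᵀJR)⁻¹Rᵀ in the Loewner order. -/
open Matrix

/-!
Passing from `R` to `H = R * M` replaces `J` by its compression `K = Rᵀ * J * R` and conjugates by
`R`, so it suffices that `M * (Mᵀ * K * M)⁻¹ * Mᵀ ≤ K⁻¹`. The left-hand side `C` satisfies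
`C * K * C = C`, hence the Hermitian difference `T = K⁻¹ - C` satisfies `T * K * T = T`, which is
positive semidefinite because `K` is.
-/

section CompressionInv

variable {m n p α : Type*} [Fintype m] [Fintype n] [DecidableEq n] [CommRing α] [StarRing α]

/-- The inverse of the compression `Hᴴ * J * H` of `J` along `H`, transported back to the ambient
space. If `J` is Hermitian and the compression is invertible, then `compressionInv J H * J` is the
`J`-orthogonal projection onto the column space of `H`. If the compression is not invertible, then
`compressionInv J H = 0`. -/
noncomputable def compressionInv (J : Matrix m m α) (H : Matrix m n α) : Matrix m m α :=
  H * (Hᴴ * J * H)⁻¹ * Hᴴ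

theorem compressionInv_mul [Fintype p] (J : Matrix m m α) (R : Matrix m p α) (M : Matrix p n α) :
    compressionInv J (R * M) = R * compressionInv (Rᴴ * J * R) M * Rᴴ := by
  simp only [compressionInv, conjTranspose_mul, Matrix.mul_assoc]

theorem isHermitian_compressionInv {J : Matrix m m α} (hJ : J.IsHermitian) (H : Matrix m n α) :
    (compressionInv J H).IsHermitian :=
  isHermitian_mul_mul_conjTranspose H (isHermitian_conjTranspose_mul_mul H hJ).inv

theorem compressionInv_mul_mul_compressionInv {J : Matrix m m α} {H : Matrix m n α}
    (h : IsUnit (Hᴴ * J * H)) :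
    compressionInv J H * J * compressionInv J H = compressionInv J H := by
  calc compressionInv J H * J * compressionInv J H
      = H * ((Hᴴ * J * H)⁻¹ * (Hᴴ * J * H)) * (Hᴴ * J * H)⁻¹ * Hᴴ := by
        simp only [compressionInv, Matrix.mul_assoc]
    _ = compressionInv J H := by
        rw [nonsing_inv_mul _ ((isUnit_iff_isUnit_det _).1 h), Matrix.mul_one, compressionInv]

variable [PartialOrder α]

theorem posSemidef_inv_sub_compressionInv [Fintype p] [DecidableEq p] {K : Matrix n n α}
    {M : Matrix n p α} (hK : K.PosSemidef) (hKu : IsUnit K) (hM : IsUnit (Mᴴ * K * M)) :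
    (K⁻¹ - compressionInv K M).PosSemidef := by
  have hdet : IsUnit K.det := (isUnit_iff_isUnit_det K).1 hKu
  have hT : (K⁻¹ - compressionInv K M).IsHermitian :=
    hK.isHermitian.inv.sub (isHermitian_compressionInv hK.isHermitian M)
  have hTKT : (K⁻¹ - compressionInv K M) * K * (K⁻¹ - compressionInv K M) =
      K⁻¹ - compressionInv K M := by
    have hKK : compressionInv K M * K * K⁻¹ = compressionInv K M :=
      mul_nonsing_inv_cancel_right K _ hdet
    rw [Matrix.sub_mul, nonsing_inv_mul K hdet, Matrix.sub_mul, Matrix.one_mul, Matrix.mul_sub,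
      hKK, compressionInv_mul_mul_compressionInv hM, sub_self, sub_zero]
  simpa only [hT.eq, hTKT] using hK.conjTranspose_mul_mul_same (K⁻¹ - compressionInv K M)

theorem proj_le_proj_general [Fintype p] [DecidableEq p] {J : Matrix m m α} {R : Matrix m n α}
    {M : Matrix n p α} {H : Matrix m p α} (hH : H = R * M) (hJR : (Rᴴ * J * R).PosSemidef)
    (hHJH : IsUnit (Hᴴ * J * H)) (hRJR : IsUnit (Rᴴ * J * R)) :
    (R * (Rᴴ * J * R)⁻¹ * Rᴴ - H * (Hᴴ * J * H)⁻¹ * Hᴴ).PosSemidef := by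
  subst hH
  have hM : IsUnit (Mᴴ * (Rᴴ * J * R) * M) := by
    simpa only [conjTranspose_mul, Matrix.mul_assoc] using hHJH
  change (R * (Rᴴ * J * R)⁻¹ * Rᴴ - compressionInv J (R * M)).PosSemidef
  rw [compressionInv_mul, ← Matrix.sub_mul, ← Matrix.mul_sub]
  exact (posSemidef_inv_sub_compressionInv hJR hRJR hM).mul_mul_conjTranspose_same R

end CompressionInv

/-- For symmetric positive definite `J`, `H = RM`, with `HᵀJH` and `RᵀJR`
invertible, `H(HᵀJH)⁻¹Hᵀ ≤ R(RᵀJR)⁻¹Rᵀ` in the Loewner order. -/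
theorem proj_le_proj {N k l : ℕ} (J : Matrix (Fin N) (Fin N) ℝ)
    (R : Matrix (Fin N) (Fin k) ℝ) (M : Matrix (Fin k) (Fin l) ℝ)
    (hJ : J.PosDef) (hJsymm : Jᵀ = J)
    (H : Matrix (Fin N) (Fin l) ℝ) (hH : H = R * M)
    (hHJH : IsUnit (Hᵀ * J * H)) (hRJR : IsUnit (Rᵀ * J * R)) :
    (R * (Rᵀ * J * R)⁻¹ * Rᵀ - H * (Hᵀ * J * H)⁻¹ * Hᵀ).PosSemidef := by
  simp only [← conjTranspose_eq_transpose_of_trivial] at hHJH hRJR ⊢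
  exact proj_le_proj_general hH (hJ.posSemidef.conjTranspose_mul_mul_same R) hHJH hRJR
end

section
/- Let B ∈ ℝ^{T×N} be a real matrix of rank r ≥ 1, where T ≥ 1. Then there exist F ∈ ℝ^{T×r} and Λ ∈ ℝ^{N×r} such that FᵀF = T·I_r, ΛᵀΛ is a diagonal matrix with strictly positive diagonal entries, B = FΛᵀ, and the column space of Λ equals the column space of Bᵀ. -/
open Matrix

/-!
If the columns of `V` are orthonormal eigenvectors of `B * Bᴴ` for its nonzero eigenvalues, then
`1 - V * Vᴴ` annihilates `B * Bᴴ`, hence also `B`. So `B = V * (Bᴴ * V)ᴴ`, and the columns of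
`Bᴴ * V` are orthogonal with the nonzero eigenvalues as squared norms. It remains to move a factor
`√c` from the second matrix to the first.
-/

theorem span_range_col_mul_of_mul_eq_one {R l m n : Type*} [CommSemiring R] [Fintype m]
    [Fintype n] [DecidableEq m] (A : Matrix l m R) {C : Matrix m n R} {D : Matrix n m R}
    (h : C * D = 1) :
    Submodule.span R (Set.range (A * C).col) = Submodule.span R (Set.range A.col) := by
  have range_C : LinearMap.range C.mulVecLin = ⊤ := LinearMap.range_eq_top.2 fun v =>
    ⟨D *ᵥ v, by rw [mulVecLin_apply, mulVec_mulVec, h, one_mulVec]⟩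
  rw [← range_mulVecLin, ← range_mulVecLin, mulVecLin_mul,
    LinearMap.range_comp_of_range_eq_top _ range_C]

theorem submatrix_mul_diagonal_mul_submatrix {R k l m n : Type*}
    [NonUnitalNonAssocSemiring R] [Fintype k] [DecidableEq k] [Fintype m] [DecidableEq m]
    {e : k → m} (he : Function.Injective e) (P : Matrix l m R) {d : m → R}
    (hd : ∀ i ∉ Set.range e, d i = 0) (Q : Matrix m n R) :
    P.submatrix id e * diagonal (d ∘ e) * Q.submatrix e id = P * diagonal d * Q := by
  ext a b
  rw [mul_apply, mul_apply]
  simp only [mul_diagonal, submatrix_apply, id_eq, Function.comp_apply]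
  exact Fintype.sum_of_injective e he _ _ (fun i hi => by rw [hd i hi, mul_zero, zero_mul])
    fun _ => rfl

theorem matrix_smul_mul_smul {R A l m n : Type*} [Monoid R] [NonUnitalNonAssocSemiring A]
    [DistribMulAction R A] [IsScalarTower R A A] [SMulCommClass R A A] [Fintype m] (a b : R)
    (M : Matrix l m A) (N : Matrix m n A) : (a • M) * (b • N) = (a * b) • (M * N) := by
  rw [Matrix.smul_mul, Matrix.mul_smul, smul_smul]

theorem mul_conjTranspose_mul_eq_self_of_self_mul_conjTranspose_eq {R k m n : Type*} [Ring R]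
    [PartialOrder R] [StarRing R] [StarOrderedRing R] [NoZeroDivisors R] [Fintype k]
    [DecidableEq k] [Fintype m] [Fintype n] {B : Matrix m n R} {V : Matrix m k R}
    {C : Matrix k m R} (hV : Vᴴ * V = 1) (hB : B * Bᴴ = V * C) : V * (Vᴴ * B) = B := by
  classical
  have annihilates_gram : (1 - V * Vᴴ) * (B * Bᴴ) = 0 := by
    rw [hB, Matrix.sub_mul, Matrix.one_mul, Matrix.mul_assoc, ← Matrix.mul_assoc Vᴴ, hV,
      Matrix.one_mul, sub_self]
  have annihilates : (1 - V * Vᴴ) * B = 0 :=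
    (mul_self_mul_conjTranspose_eq_zero B _).1 annihilates_gram
  rw [Matrix.sub_mul, Matrix.one_mul, sub_eq_zero, Matrix.mul_assoc] at annihilates
  exact annihilates.symm

section RCLike

open scoped ComplexOrder

variable {𝕜 ι m n : Type*} [RCLike 𝕜] [Fintype ι] [DecidableEq ι] [Fintype m] [Fintype n]

theorem exists_compact_spectral_decomposition {A : Matrix m m 𝕜} (hA : A.IsHermitian)
    (hrank : A.rank = Fintype.card ι) :
    ∃ (V : Matrix m ι 𝕜) (d : ι → ℝ), Vᴴ * V = 1 ∧ (∀ i, d i ≠ 0) ∧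
      A = V * diagonal (fun i => (d i : 𝕜)) * Vᴴ := by
  classical
  let e : ι ≃ {i // hA.eigenvalues i ≠ 0} :=
    Fintype.equivOfCardEq (hrank.symm.trans hA.rank_eq_card_non_zero_eigs)
  let f : ι → m := fun j => e j
  have f_injective : Function.Injective f := Subtype.val_injective.comp e.injective
  have eigenvalue_eq_zero : ∀ i ∉ Set.range f, (hA.eigenvalues i : 𝕜) = 0 := by
    intro i hi
    by_contra hne
    exact hi ⟨e.symm ⟨i, RCLike.ofReal_ne_zero.1 hne⟩, by simp [f]⟩
  let U : Matrix m m 𝕜 := hA.eigenvectorUnitary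
  have U_unitary : Uᴴ * U = 1 := Unitary.coe_star_mul_self hA.eigenvectorUnitary
  have A_eq : A = U * diagonal (fun i => (hA.eigenvalues i : 𝕜)) * Uᴴ := hA.spectral_theorem
  refine ⟨U.submatrix id f, hA.eigenvalues ∘ f, ?_, fun j => (e j).2, ?_⟩
  · rw [conjTranspose_submatrix, ← submatrix_mul _ _ f id f Function.bijective_id, U_unitary,
      submatrix_one f f_injective]
  · rw [conjTranspose_submatrix]
    exact A_eq.trans (submatrix_mul_diagonal_mul_submatrix f_injective U eigenvalue_eq_zero Uᴴ).symm

theorem exists_eq_mul_conjTranspose_of_rank_eq_card (B : Matrix m n 𝕜)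
    (hrank : B.rank = Fintype.card ι) :
    ∃ (V : Matrix m ι 𝕜) (W : Matrix n ι 𝕜), Vᴴ * V = 1 ∧
      (∃ d : ι → ℝ, (∀ i, 0 < d i) ∧ Wᴴ * W = diagonal (fun i => (d i : 𝕜))) ∧
      B = V * Wᴴ := by
  obtain ⟨V, d, hV, d_ne_zero, gram_eq⟩ := exists_compact_spectral_decomposition (ι := ι)
    (isHermitian_mul_conjTranspose_self B) (by rw [rank_self_mul_conjTranspose, hrank])
  have W_gram : (Bᴴ * V)ᴴ * (Bᴴ * V) = diagonal (fun i => (d i : 𝕜)) := calc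
    (Bᴴ * V)ᴴ * (Bᴴ * V) = Vᴴ * (B * Bᴴ) * V := by
      simp only [conjTranspose_mul, conjTranspose_conjTranspose, Matrix.mul_assoc]
    _ = (Vᴴ * V) * diagonal (fun i => (d i : 𝕜)) * (Vᴴ * V) := by
      simp only [gram_eq, Matrix.mul_assoc]
    _ = diagonal (fun i => (d i : 𝕜)) := by rw [hV, Matrix.one_mul, Matrix.mul_one]
  have d_nonneg (i : ι) : 0 ≤ d i := by
    have posSemidef := posSemidef_conjTranspose_mul_self (Bᴴ * V)
    rw [W_gram, posSemidef_diagonal_iff] at posSemidef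
    exact RCLike.ofReal_nonneg.1 (posSemidef i)
  refine ⟨V, Bᴴ * V, hV, ⟨d, fun i => (d_nonneg i).lt_of_ne' (d_ne_zero i), W_gram⟩, ?_⟩
  rw [conjTranspose_mul, conjTranspose_conjTranspose,
    mul_conjTranspose_mul_eq_self_of_self_mul_conjTranspose_eq hV
      (gram_eq.trans (Matrix.mul_assoc ..))]

theorem exists_factor_representation_general (B : Matrix m n 𝕜) (hrank : B.rank = Fintype.card ι)
    {c : ℝ} (hc : 0 < c) :
    ∃ (F : Matrix m ι 𝕜) (Λ : Matrix n ι 𝕜),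
      Fᴴ * F = c • (1 : Matrix ι ι 𝕜) ∧
      (∃ d : ι → ℝ, (∀ i, 0 < d i) ∧ Λᴴ * Λ = diagonal (fun i => (d i : 𝕜))) ∧
      B = F * Λᴴ ∧
      Submodule.span 𝕜 (Set.range Λ.col) = Submodule.span 𝕜 (Set.range Bᴴ.col) := by
  obtain ⟨V, W, hV, ⟨d, d_pos, hW⟩, rfl⟩ := exists_eq_mul_conjTranspose_of_rank_eq_card B hrank
  have sqrt_ne_zero : √c ≠ 0 := (Real.sqrt_pos.2 hc).ne'
  let F : Matrix m ι 𝕜 := √c • V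
  let Λ : Matrix n ι 𝕜 := (√c)⁻¹ • W
  have F_gram : Fᴴ * F = c • (1 : Matrix ι ι 𝕜) := by
    rw [conjTranspose_smul, star_trivial, matrix_smul_mul_smul, Real.mul_self_sqrt hc.le, hV]
  have Λ_gram : Λᴴ * Λ = diagonal (fun i => ((c⁻¹ * d i : ℝ) : 𝕜)) := by
    rw [conjTranspose_smul, star_trivial, matrix_smul_mul_smul, ← mul_inv,
      Real.mul_self_sqrt hc.le, hW, ← diagonal_smul]
    simp only [Pi.smul_def, RCLike.real_smul_eq_coe_mul, RCLike.ofReal_mul]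
  have factorization : V * Wᴴ = F * Λᴴ := by
    rw [conjTranspose_smul, star_trivial, matrix_smul_mul_smul, mul_inv_cancel₀ sqrt_ne_zero,
      one_smul]
  have conjTranspose_F_mul : Fᴴ * (c⁻¹ • F) = 1 := by
    rw [Matrix.mul_smul, F_gram, inv_smul_smul₀ hc.ne']
  refine ⟨F, Λ, F_gram, ⟨_, fun i => mul_pos (inv_pos.2 hc) (d_pos i), Λ_gram⟩, factorization, ?_⟩
  rw [factorization, conjTranspose_mul, conjTranspose_conjTranspose,
    span_range_col_mul_of_mul_eq_one Λ conjTranspose_F_mul]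

end RCLike

/-- **Normalized factor representation.** Any real `T×N` matrix `B` of rank
`r ≥ 1` (with `T ≥ 1`) can be written `B = F·Λᵀ` where `FᵀF = T·I_r`, `ΛᵀΛ` is
diagonal with strictly positive diagonal entries, and the column space of `Λ`
(the span of the columns of `Λ`) equals the column space of `Bᵀ` (the span of
the rows of `B`). -/
theorem exists_factor_representation {T N r : ℕ} (hT : 1 ≤ T) (hr : 1 ≤ r)
    (B : Matrix (Fin T) (Fin N) ℝ) (hrank : B.rank = r) :
    ∃ (F : Matrix (Fin T) (Fin r) ℝ) (Λ : Matrix (Fin N) (Fin r) ℝ),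
      Fᵀ * F = (T : ℝ) • (1 : Matrix (Fin r) (Fin r) ℝ) ∧
      (∃ d : Fin r → ℝ, (∀ i, 0 < d i) ∧ Λᵀ * Λ = Matrix.diagonal d) ∧
      B = F * Λᵀ ∧
      Submodule.span ℝ (Set.range fun j : Fin r => fun i : Fin N => Λ i j) =
        Submodule.span ℝ (Set.range fun t : Fin T => fun i : Fin N => B t i) := by
  have hrank' : B.rank = Fintype.card (Fin r) := by rw [hrank, Fintype.card_fin]
  -- Over `ℝ`, `ᴴ` and `ᵀ` agree definitionally.
  exact exists_factor_representation_general B hrank' (Nat.cast_pos.2 hT)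
end

section
/- Let p ≥ 2 and 1 ≤ r ≤ p−1, and let σ_1 ≥ σ_2 ≥ … ≥ σ_p ≥ 0 with σ_r > 0 and σ_j = 0 for all j > r. Let σ̂_1, …, σ̂_p ≥ 0 and ε ≥ 0 satisfy |σ̂_j − σ_j| ≤ ε for all j, and let c > 0 with ε < σ_r. Assume (ε+c)² < c·(σ_r − ε + c) and, for every 1 ≤ j ≤ r−1, (ε+c)·(σ_j + ε + c) < (σ_{j+1} − ε + c)·(σ_r − ε + c). Then r is the unique minimizer over j ∈ {1, …, p−1} of the ridge-type ratio (σ̂_{j+1} + c)/(σ̂_j + c); that is, (σ̂_{r+1} + c)/(σ̂_r + c) < (σ̂_{j+1} + c)/(σ̂_j + c) for every j ∈ {1, …, p−1} with j ≠ r. -/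
/-!
Error `ε` in the singular values confines each estimated ratio to an explicit interval. At `r` the
ratio is at most `(ε + c) / (σ_r - ε + c)`; for `j < r` it is at least
`(σ_{j+1} - ε + c) / (σ_j + ε + c)`, and for `j > r` at least `c / (ε + c)`. After clearing
denominators, the two gap conditions say that the upper bound at `r` lies strictly below the
lower bounds elsewhere.
-/

section RidgeRatio

variable {K : Type*} [Field K]

/-- The ridge-type ratio `(s_{j+1} + c) / (s_j + c)` of consecutive terms of a sequence `s`, whose
minimizer in `j` is the rank estimate when `s` lists the estimated singular values. -/
def ridgeRatio (c : K) (s : ℕ → K) (j : ℕ) : K :=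
  (s (j + 1) + c) / (s j + c)

variable [LinearOrder K] [IsStrictOrderedRing K] {c ε : K} {s t : ℕ → K} {j : ℕ}

theorem ridgeRatio_le_of_abs_sub_le (hj : |t j - s j| ≤ ε) (hj' : |t (j + 1) - s (j + 1)| ≤ ε)
    (hnum : 0 ≤ s (j + 1) + ε + c) (hden : 0 < s j - ε + c) :
    ridgeRatio c t j ≤ (s (j + 1) + ε + c) / (s j - ε + c) := by
  have hlower : s j - ε ≤ t j := sub_le_of_abs_sub_le_left hj
  have hupper : t (j + 1) ≤ s (j + 1) + ε := by linarith [(abs_le.mp hj').2]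
  exact div_le_div₀ hnum (by gcongr) hden (by gcongr)

theorem le_ridgeRatio_of_abs_sub_le (hj : |t j - s j| ≤ ε) (hj' : |t (j + 1) - s (j + 1)| ≤ ε)
    (hnum : 0 ≤ t (j + 1) + c) (hden : 0 < t j + c) :
    (s (j + 1) - ε + c) / (s j + ε + c) ≤ ridgeRatio c t j := by
  have hupper : t j ≤ s j + ε := by linarith [(abs_le.mp hj).2]
  have hlower : s (j + 1) - ε ≤ t (j + 1) := sub_le_of_abs_sub_le_left hj'
  exact div_le_div₀ hnum (by gcongr) hden (by gcongr)

theorem div_add_le_ridgeRatio (hc : 0 < c) (hj : 0 ≤ t j) (hj' : 0 ≤ t (j + 1)) (hjε : t j ≤ ε) :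
    c / (ε + c) ≤ ridgeRatio c t j :=
  div_le_div₀ (by positivity) (le_add_of_nonneg_left hj') (by positivity) (by gcongr)

theorem ridge_ratio_rank_selection_general {p r : ℕ} (hr : 1 ≤ r) (hrp : r < p) (σ σh : ℕ → K)
    (hzero : ∀ j, r < j → j ≤ p → σ j = 0)
    (hnonneg : ∀ j, 1 ≤ j → j ≤ p → 0 ≤ σh j)
    (happrox : ∀ j, 1 ≤ j → j ≤ p → |σh j - σ j| ≤ ε)
    (hc : 0 < c)
    (hgap_zero : (ε + c) ^ 2 < c * (σ r - ε + c))
    (hgap : ∀ j, 1 ≤ j → j < r →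
      (ε + c) * (σ j + ε + c) < (σ (j + 1) - ε + c) * (σ r - ε + c))
    (j : ℕ) (hj : 1 ≤ j) (hjp : j < p) (hjr : j ≠ r) :
    ridgeRatio c σh r < ridgeRatio c σh j := by
  have hε : 0 ≤ ε := (abs_nonneg _).trans (happrox r hr hrp.le)
  have hden_r : 0 < σ r - ε + c :=
    (mul_pos_iff_of_pos_left hc).mp ((sq_nonneg _).trans_lt hgap_zero)
  have hzero_succ : σ (r + 1) = 0 := hzero (r + 1) r.lt_succ_self hrp
  have hratio_r : ridgeRatio c σh r ≤ (ε + c) / (σ r - ε + c) := by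
    have h := ridgeRatio_le_of_abs_sub_le (c := c) (happrox r hr hrp.le)
      (happrox (r + 1) r.succ_pos hrp) (by rw [hzero_succ]; positivity) hden_r
    rwa [hzero_succ, zero_add] at h
  have happrox_j := happrox j hj hjp.le
  have hnonneg_j := hnonneg j hj hjp.le
  have hnonneg_succ := hnonneg (j + 1) j.succ_pos hjp
  refine hratio_r.trans_lt ?_
  rcases hjr.lt_or_gt with hlt | hgt
  · have hden_j : 0 < σ j + ε + c := by linarith [(abs_le.mp happrox_j).2]
    calc (ε + c) / (σ r - ε + c)
        < (σ (j + 1) - ε + c) / (σ j + ε + c) := (div_lt_div_iff₀ hden_r hden_j).mpr (hgap j hj hlt)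
      _ ≤ ridgeRatio c σh j := le_ridgeRatio_of_abs_sub_le happrox_j
          (happrox (j + 1) j.succ_pos hjp) (by positivity) (by positivity)
  · have hle : σh j ≤ ε := by
      simpa only [hzero j hgt hjp.le, sub_zero, abs_of_nonneg hnonneg_j] using happrox_j
    calc (ε + c) / (σ r - ε + c)
        < c / (ε + c) := (div_lt_div_iff₀ hden_r (by positivity)).mpr (by rwa [← sq])
      _ ≤ ridgeRatio c σh j := div_add_le_ridgeRatio hc hnonneg_j hnonneg_succ hle

end RidgeRatio

/-- **Consistency of the ridge-type ratio rank estimator.** Let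
`σ_1 ≥ … ≥ σ_p ≥ 0` with `σ_r > 0` and `σ_j = 0` for `j > r`
(`1 ≤ r ≤ p−1`, `p ≥ 2`), and let `σ̂_j ≥ 0` satisfy `|σ̂_j − σ_j| ≤ ε` on
`1 ≤ j ≤ p`. If `c > 0`, `ε < σ_r`, `(ε+c)² < c·(σ_r − ε + c)`, and
`(ε+c)·(σ_j + ε + c) < (σ_{j+1} − ε + c)·(σ_r − ε + c)` for all
`1 ≤ j ≤ r−1`, then `r` is the unique minimizer of
`j ↦ (σ̂_{j+1} + c)/(σ̂_j + c)` over `j ∈ {1, …, p−1}`. -/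
theorem ridge_ratio_rank_selection (p r : ℕ) (hp : 2 ≤ p) (hr1 : 1 ≤ r)
    (hrp : r ≤ p - 1) (σ σh : ℕ → ℝ) (ε c : ℝ)
    (hmono : ∀ j, 1 ≤ j → j < p → σ (j + 1) ≤ σ j)
    (hσnn : ∀ j, 1 ≤ j → j ≤ p → 0 ≤ σ j)
    (hσr : 0 < σ r)
    (hzero : ∀ j, r < j → j ≤ p → σ j = 0)
    (hσhnn : ∀ j, 1 ≤ j → j ≤ p → 0 ≤ σh j)
    (hε : 0 ≤ ε)
    (happrox : ∀ j, 1 ≤ j → j ≤ p → |σh j - σ j| ≤ ε)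
    (hc : 0 < c) (hεσ : ε < σ r)
    (hgap0 : (ε + c) ^ 2 < c * (σ r - ε + c))
    (hgap : ∀ j, 1 ≤ j → j ≤ r - 1 →
      (ε + c) * (σ j + ε + c) < (σ (j + 1) - ε + c) * (σ r - ε + c)) :
    ∀ j, 1 ≤ j → j ≤ p - 1 → j ≠ r →
      (σh (r + 1) + c) / (σh r + c) < (σh (j + 1) + c) / (σh j + c) := by
  intro j hj hjp hjr
  exact ridge_ratio_rank_selection_general hr1 (by omega) σ σh hzero hσhnn happrox hc hgap0
    (fun i hi hir => hgap i hi (by omega)) j hj (by omega) hjr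
end
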